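/- Let A be a complete lattice and let F, G : A → A be monotone maps. Suppose that for every b ∈ A with νF ≤ b and G b ≤ b, one has G (F b) ≤ F b. Then G (νF) ≤ νF. (In other words, in the closedness hypothesis 'Pre_{νF}(G) is closed under F', the condition νF ≤ F b is automatic, since νF = F(νF) ≤ F b whenever νF ≤ b.) -/

import Mathlib

/-!
The set of pre-fixed points of `G` above `νF` has a least element `m`. As `F` maps this set to
itself, `m ≤ F m`, so `m ≤ νF` by coinduction. Hence `νF = m`, which is a pre-fixed point of `G`.
-/

/-- The set `Pre_a(G)` of pre-fixed points of `G` above `a`, for an arbitrary map `G`. Its least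
element, when there is one, is the candidate to which coinduction is applied. -/
def preFixedAbove {A : Type*} [LE A] (G : A → A) (a : A) : Set A :=
  {b | a ≤ b ∧ G b ≤ b}

theorem mapsTo_preFixedAbove {A : Type*} [Preorder A] {F G : A → A} {a : A}
    (hF : Monotone F) (ha : a ≤ F a) (hclosed : ∀ b, a ≤ b → G b ≤ b → G (F b) ≤ F b) :
    Set.MapsTo F (preFixedAbove G a) (preFixedAbove G a) :=
  fun b ⟨hab, hGb⟩ => ⟨ha.trans (hF hab), hclosed b hab hGb⟩

theorem isLeast_preFixedAbove_lfp {A : Type*} [CompleteLattice A] (G : A →o A) (a : A) :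
    IsLeast (preFixedAbove G a) (OrderHom.const A a ⊔ G).lfp := by
  simpa [preFixedAbove] using (OrderHom.const A a ⊔ G).isLeast_lfp_le

theorem stmt1_general {A : Type*} [PartialOrder A] {F G : A → A} {ν m : A} (hF : Monotone F)
    (hν : IsGreatest {a | a ≤ F a} ν) (hm : IsLeast (preFixedAbove G ν) m)
    (hclosed : ∀ b, ν ≤ b → G b ≤ b → G (F b) ≤ F b) : G ν ≤ ν := by
  have le_map : m ≤ F m := hm.2 (mapsTo_preFixedAbove hF hν.1 hclosed hm.1)
  have eq_gfp : m = ν := le_antisymm (hν.2 le_map) hm.1.1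
  exact eq_gfp ▸ hm.1.2

/-- If for every `b` with `νF ≤ b` and `G b ≤ b` we have
`G (F b) ≤ F b`, then `G (νF) ≤ νF`. -/
theorem stmt1 {A : Type*} [CompleteLattice A] (F G : A →o A)
    (hclosed : ∀ b : A, OrderHom.gfp F ≤ b → G b ≤ b → G (F b) ≤ F b) :
    G (OrderHom.gfp F) ≤ OrderHom.gfp F :=
  stmt1_general F.monotone F.isGreatest_gfp_le (isLeast_preFixedAbove_lfp G F.gfp) hclosed
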